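/- (Fiacco) Suppose (x*, y*, z*) is a KKT point of NLP(p*) at which SOSC, SCS and LICQ hold, and let w(p) = (x(p), y(p), z(p)) be the unique continuously differentiable local primal-dual solution map with w(p*) = (x*, y*, z*) (given by Fiacco's theorem). Then the local value function φ_ℓ(p) = f(x(p), p) is twice continuously differentiable in a neighborhood of p*, and satisfies φ_ℓ(p) = L(x(p), y(p), z(p), p) and ∇_p φ_ℓ(p) = ∇_p L(x(p), y(p), z(p), p), where ∇_p L(x, y, z, p) denotes the partial gradient of the Lagrangian with respect to p at fixed (x, y, z). -/

import Mathlib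

/-!
The proof is an envelope argument. Fix `p` in the interior of `U` and freeze the multipliers at
`(y(p), z(p))`. Near `p` the function `q ↦ L(x(q), y(p), z(p), q)` coincides with `φ(q) = f(x(q), q)`:
the equality constraints vanish along the path, and if `z_j(p) > 0` then `z_j(q) > 0` for `q` near
`p`, so complementarity forces `h_j(x(q), q) = 0` there (`eventually_eq_frozen`). Differentiating by
the chain rule at `p`, the contribution of `x(·)` is killed by stationarity of the Lagrangian, and
`∇φ(p) = ∇_p L(x(p), y(p), z(p), p)` is left (`hasFDerivAt_value`).

This gradient is the partial derivative of the jointly `C²` Lagrangian, evaluated along the `C¹`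
path `p ↦ (x(p), y(p), z(p), p)`; hence it is `C¹`, and `φ` is `C²`.
-/


open Filter Topology Set Matrix

attribute [local instance] Classical.propDecidable

namespace SensNLP

variable {n l me mi : ℕ}
variable (f : (Fin n → ℝ) → (Fin l → ℝ) → ℝ)
  (g : (Fin n → ℝ) → (Fin l → ℝ) → Fin me → ℝ)
  (h : (Fin n → ℝ) → (Fin l → ℝ) → Fin mi → ℝ)
  (p : Fin l → ℝ) (x : Fin n → ℝ) (y : Fin me → ℝ) (z : Fin mi → ℝ)
  (hdir : Fin l → ℝ)

/-- The Lagrangian `L(x,y,z,p) = f(x,p) + yᵀ g(x,p) + zᵀ h(x,p)`. -/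
noncomputable def Lag : ℝ :=
  f x p + ∑ i, y i * g x p i + ∑ j, z j * h x p j

/-- The gradient (with respect to `x`) of a scalar function, as a vector. -/
noncomputable def gradx (φ : (Fin n → ℝ) → ℝ) (x : Fin n → ℝ) : Fin n → ℝ :=
  fun j => fderiv ℝ φ x (Pi.single j 1)

/-- The quadratic form `dᵀ ∇²φ(x) d` of the Hessian of a scalar function. -/
noncomputable def hessQ (φ : (Fin n → ℝ) → ℝ) (x d : Fin n → ℝ) : ℝ :=
  fderiv ℝ (fun x' => fderiv ℝ φ x' d) x d

/-- KKT conditions: stationarity of the Lagrangian in `x`, primal feasibility,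
dual feasibility and complementarity. -/
def IsKKT : Prop :=
  fderiv ℝ (fun x' => Lag f g h p x' y z) x = 0 ∧
  g x p = 0 ∧ h x p ≤ 0 ∧ 0 ≤ z ∧ ∑ j, z j * h x p j = 0

/-- The multiplier set `M_p(x)`. -/
def MultSet : Set ((Fin me → ℝ) × (Fin mi → ℝ)) :=
  {yz | IsKKT f g h p x yz.1 yz.2}

/-- LICQ: linear independence of the gradients of equality and active inequality
constraints. -/
def LICQ : Prop :=
  LinearIndependent ℝ
    (fun i : Fin me ⊕ {j : Fin mi // h x p j = 0} =>
      Sum.elim (fun i => gradx (fun x' => g x' p i) x)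
        (fun j => gradx (fun x' => h x' p j.1) x) i)

/-- MFCQ. -/
def MFCQ : Prop :=
  LinearIndependent ℝ (fun i : Fin me => gradx (fun x' => g x' p i) x) ∧
  ∃ d : Fin n → ℝ,
    (∀ i, fderiv ℝ (fun x' => g x' p i) x d = 0) ∧
    (∀ j, h x p j = 0 → fderiv ℝ (fun x' => h x' p j) x d < 0)

/-- SMFCQ (relative to a multiplier `z`). -/
def SMFCQ : Prop :=
  LinearIndependent ℝ
    (fun i : Fin me ⊕ {j : Fin mi // h x p j = 0 ∧ 0 < z j} =>
      Sum.elim (fun i => gradx (fun x' => g x' p i) x)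
        (fun j => gradx (fun x' => h x' p j.1) x) i) ∧
  ∃ d : Fin n → ℝ,
    (∀ i, fderiv ℝ (fun x' => g x' p i) x d = 0) ∧
    (∀ j, h x p j = 0 → 0 < z j → fderiv ℝ (fun x' => h x' p j) x d = 0) ∧
    (∀ j, h x p j = 0 → z j = 0 → fderiv ℝ (fun x' => h x' p j) x d < 0)

/-- CRCQ at `x` (for parameter `p`): every subfamily of gradients of equality
constraints and active inequality constraints has constant rank near `x`. -/
def CRCQ : Prop :=
  ∃ W ∈ 𝓝 x, ∀ (J : Finset (Fin me)) (I : Finset (Fin mi)),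
    (∀ i ∈ I, h x p i = 0) →
    ∃ r : ℕ, ∀ x' ∈ W,
      Module.finrank ℝ ↥(Submodule.span ℝ
        ((fun i => gradx (fun x'' => g x'' p i) x') '' ↑J ∪
         (fun i => gradx (fun x'' => h x'' p i) x') '' ↑I)) = r

/-- The critical cone `C_p(x)`. -/
def criticalCone : Set (Fin n → ℝ) :=
  {d | fderiv ℝ (fun x' => f x' p) x d ≤ 0 ∧
       (∀ i, fderiv ℝ (fun x' => g x' p i) x d = 0) ∧
       (∀ j, h x p j = 0 → fderiv ℝ (fun x' => h x' p j) x d ≤ 0)}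

/-- The set `D_p(x;z)` used in the strong second-order sufficiency condition. -/
def Dset : Set (Fin n → ℝ) :=
  {d | (∀ i, fderiv ℝ (fun x' => g x' p i) x d = 0) ∧
       (∀ j, h x p j = 0 → 0 < z j → fderiv ℝ (fun x' => h x' p j) x d = 0)}

/-- SOSC. -/
def SOSC : Prop :=
  ∃ yz ∈ MultSet f g h p x, ∀ d ∈ criticalCone f g h p x, d ≠ 0 →
    0 < hessQ (fun x' => Lag f g h p x' yz.1 yz.2) x d

/-- SSOSC. -/
def SSOSC : Prop :=
  ∃ yz ∈ MultSet f g h p x, ∀ d ∈ Dset g h p x yz.2, d ≠ 0 →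
    0 < hessQ (fun x' => Lag f g h p x' yz.1 yz.2) x d

/-- GSSOSC. -/
def GSSOSC : Prop :=
  ∀ yz ∈ MultSet f g h p x, ∀ d ∈ Dset g h p x yz.2, d ≠ 0 →
    0 < hessQ (fun x' => Lag f g h p x' yz.1 yz.2) x d

/-- Strict complementarity slackness: no weakly active constraint. -/
def SCS : Prop :=
  ∀ j, h x p j = 0 → z j ≠ 0

/-- `x` is a local solution (local minimizer) of NLP(p). -/
def IsLocalSol : Prop :=
  g x p = 0 ∧ h x p ≤ 0 ∧
  ∃ W ∈ 𝓝 x, ∀ x' ∈ W, g x' p = 0 → h x' p ≤ 0 → f x p ≤ f x' p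

/-- The directional critical set `K_p(x,z;h)`. -/
def Kset : Set (Fin n → ℝ) :=
  {d | (∀ i, fderiv ℝ (fun x' => g x' p i) x d
          + fderiv ℝ (fun p' => g x p' i) p hdir = 0) ∧
       (∀ j, h x p j = 0 → 0 < z j →
          fderiv ℝ (fun x' => h x' p j) x d
          + fderiv ℝ (fun p' => h x p' j) p hdir = 0) ∧
       (∀ j, h x p j = 0 → z j = 0 →
          fderiv ℝ (fun x' => h x' p j) x d
          + fderiv ℝ (fun p' => h x p' j) p hdir ≤ 0)}

/-- The objective of the sensitivity QP:
`½ dᵀ ∇²ₓₓL d + hᵀ ∇²ₚₓL d`. -/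
noncomputable def QPobj (d : Fin n → ℝ) : ℝ :=
  (1 / 2) * hessQ (fun x' => Lag f g h p x' y z) x d +
    fderiv ℝ (fun p' => fderiv ℝ (fun x'' => Lag f g h p' x'' y z) x d) p hdir

/-- The set `S_p(x;h)` of multipliers maximizing the linear functional
`(y,z) ↦ yᵀ (J_p g) h + zᵀ (J_p h) h` over `M_p(x)`. -/
def Sset : Set ((Fin me → ℝ) × (Fin mi → ℝ)) :=
  {yz ∈ MultSet f g h p x | ∀ yz' ∈ MultSet f g h p x,
    (∑ i, yz'.1 i * fderiv ℝ (fun p' => g x p' i) p hdir) +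
      (∑ j, yz'.2 j * fderiv ℝ (fun p' => h x p' j) p hdir) ≤
    (∑ i, yz.1 i * fderiv ℝ (fun p' => g x p' i) p hdir) +
      (∑ j, yz.2 j * fderiv ℝ (fun p' => h x p' j) p hdir)}

/-- A `PC¹` (piecewise continuously differentiable) function at a point. -/
def PC1At {N' : ℕ} (F : (Fin l → ℝ) → (Fin N' → ℝ)) (p : Fin l → ℝ) : Prop :=
  ∃ N ∈ 𝓝 p, ∃ k : ℕ, ∃ Fs : Fin k → (Fin l → ℝ) → (Fin N' → ℝ),
    ContinuousOn F N ∧ (∀ i, ContDiffOn ℝ 1 (Fs i) N) ∧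
    ∀ q ∈ N, ∃ i, F q = Fs i q

/-- A piecewise linear (continuous selection of finitely many linear maps) function. -/
def IsPiecewiseLinear {N' : ℕ} (D : (Fin l → ℝ) → (Fin N' → ℝ)) : Prop :=
  Continuous D ∧ ∃ k : ℕ, ∃ T : Fin k → (Fin l → ℝ) →ₗ[ℝ] (Fin N' → ℝ),
    ∀ v, ∃ i, D v = T i v


/-- The Lagrangian as a function of the primal-dual variables and the parameter jointly. -/
noncomputable def jointLag :
    ((Fin n → ℝ) × (Fin me → ℝ) × (Fin mi → ℝ)) × (Fin l → ℝ) → ℝ :=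
  fun u => Lag f g h u.2 u.1.1 u.1.2.1 u.1.2.2

section Envelope

variable {f g h}

lemma contDiff_jointLag
    (hf : ContDiff ℝ 2 fun q : (Fin n → ℝ) × (Fin l → ℝ) => f q.1 q.2)
    (hg : ∀ i : Fin me, ContDiff ℝ 2 fun q : (Fin n → ℝ) × (Fin l → ℝ) => g q.1 q.2 i)
    (hh : ∀ j : Fin mi, ContDiff ℝ 2 fun q : (Fin n → ℝ) × (Fin l → ℝ) => h q.1 q.2 j) :
    ContDiff ℝ 2 (jointLag f g h) := by
  have hq : ContDiff ℝ 2 fun u : ((Fin n → ℝ) × (Fin me → ℝ) × (Fin mi → ℝ)) × (Fin l → ℝ) =>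
      (u.1.1, u.2) := by fun_prop
  have hy : ∀ i, ContDiff ℝ 2
      fun u : ((Fin n → ℝ) × (Fin me → ℝ) × (Fin mi → ℝ)) × (Fin l → ℝ) => u.1.2.1 i :=
    fun i => by fun_prop
  have hz : ∀ j, ContDiff ℝ 2
      fun u : ((Fin n → ℝ) × (Fin me → ℝ) × (Fin mi → ℝ)) × (Fin l → ℝ) => u.1.2.2 j :=
    fun j => by fun_prop
  unfold jointLag Lag
  exact ((hf.comp hq).add (ContDiff.sum fun i _ => (hy i).mul ((hg i).comp hq))).add
    (ContDiff.sum fun j _ => (hz j).mul ((hh j).comp hq))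

lemma IsKKT.mul_eq_zero {p : Fin l → ℝ} {x : Fin n → ℝ} {y : Fin me → ℝ} {z : Fin mi → ℝ}
    (hk : IsKKT f g h p x y z) (j : Fin mi) : z j * h x p j = 0 := by
  obtain ⟨-, -, hh, hz, hs⟩ := hk
  exact (Finset.sum_eq_zero_iff_of_nonpos
    (fun j _ => mul_nonpos_of_nonneg_of_nonpos (hz j) (hh j))).1 hs j (Finset.mem_univ j)

lemma IsKKT.lag_eq {p : Fin l → ℝ} {x : Fin n → ℝ} {y : Fin me → ℝ} {z : Fin mi → ℝ}
    (hk : IsKKT f g h p x y z) : f x p = Lag f g h p x y z := by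
  simp [Lag, hk.2.1, hk.2.2.2.2]

variable {xf : (Fin l → ℝ) → Fin n → ℝ} {yf : (Fin l → ℝ) → Fin me → ℝ}
  {zf : (Fin l → ℝ) → Fin mi → ℝ} {p₀ : Fin l → ℝ}

/-- Freezing the multipliers at `p₀` does not change the Lagrangian along the path near `p₀`:
it still equals the objective. -/
lemma eventually_eq_frozen (hz : ContinuousAt zf p₀)
    (hk : ∀ᶠ q in 𝓝 p₀, IsKKT f g h q (xf q) (yf q) (zf q)) :
    (fun q => f (xf q) q) =ᶠ[𝓝 p₀] fun q => Lag f g h q (xf q) (yf p₀) (zf p₀) := by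
  have hj : ∀ j, ∀ᶠ q in 𝓝 p₀, zf p₀ j * h (xf q) q j = 0 := by
    intro j
    by_cases h0 : zf p₀ j = 0
    · simp [h0]
    · have hzj : ContinuousAt (fun q => zf q j) p₀ := continuousAt_pi.1 hz j
      filter_upwards [hk, hzj.eventually_ne h0] with q hq hne
      rw [(mul_eq_zero.1 (hq.mul_eq_zero j)).resolve_left hne, mul_zero]
  filter_upwards [hk, eventually_all.2 hj] with q hq hq'
  simp [Lag, hq.2.1, hq']

/-- The envelope theorem along a KKT path. -/
lemma hasFDerivAt_value (hL : ContDiff ℝ 2 (jointLag f g h))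
    (hx : DifferentiableAt ℝ xf p₀) (hz : ContinuousAt zf p₀)
    (hk : ∀ᶠ q in 𝓝 p₀, IsKKT f g h q (xf q) (yf q) (zf q)) :
    HasFDerivAt (fun q => f (xf q) q)
      ((fderiv ℝ (jointLag f g h) ((xf p₀, yf p₀, zf p₀), p₀)).comp
        (ContinuousLinearMap.inr ℝ _ _)) p₀ := by
  set D := fderiv ℝ (jointLag f g h) ((xf p₀, yf p₀, zf p₀), p₀) with hD
  have hLd : HasFDerivAt (jointLag f g h) D ((xf p₀, yf p₀, zf p₀), p₀) :=
    (hL.differentiable (by norm_num) _).hasFDerivAt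
  have hstat : ∀ v, D ((v, 0, 0), 0) = 0 := by
    have h1 : HasFDerivAt (fun x' : Fin n → ℝ => ((x', yf p₀, zf p₀), p₀))
        (((ContinuousLinearMap.id ℝ (Fin n → ℝ)).prod
          ((0 : (Fin n → ℝ) →L[ℝ] (Fin me → ℝ)).prod
            (0 : (Fin n → ℝ) →L[ℝ] (Fin mi → ℝ)))).prod
          (0 : (Fin n → ℝ) →L[ℝ] (Fin l → ℝ))) (xf p₀) :=
      ((hasFDerivAt_id _).prodMk ((hasFDerivAt_const _ _).prodMk (hasFDerivAt_const _ _))).prodMk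
        (hasFDerivAt_const _ _)
    have h2 := (HasFDerivAt.comp (xf p₀) hLd h1).fderiv
    intro v
    have h3 := congrArg (fun T => T v) (h2.symm.trans hk.self_of_nhds.1)
    simpa using h3
  have h4 : HasFDerivAt (fun q => ((xf q, yf p₀, zf p₀), q))
      (((fderiv ℝ xf p₀).prod
        ((0 : (Fin l → ℝ) →L[ℝ] (Fin me → ℝ)).prod
          (0 : (Fin l → ℝ) →L[ℝ] (Fin mi → ℝ)))).prod
        (ContinuousLinearMap.id ℝ (Fin l → ℝ))) p₀ :=
    (hx.hasFDerivAt.prodMk ((hasFDerivAt_const _ _).prodMk (hasFDerivAt_const _ _))).prodMk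
      (hasFDerivAt_id _)
  have h5 := HasFDerivAt.comp (f := fun q => ((xf q, yf p₀, zf p₀), q)) p₀ hLd h4
  refine (h5.congr_of_eventuallyEq (eventually_eq_frozen hz hk)).congr_fderiv ?_
  ext1 v
  -- split the direction into its primal part, killed by stationarity, and its parameter part
  have hsplit : (((fderiv ℝ xf p₀ v, 0, 0), v) :
      ((Fin n → ℝ) × (Fin me → ℝ) × (Fin mi → ℝ)) × (Fin l → ℝ)) =
      ((fderiv ℝ xf p₀ v, 0, 0), 0) + (0, v) := by simp
  have h6 := congrArg D hsplit
  rw [map_add, hstat, zero_add] at h6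
  simpa using h6

lemma hasFDerivAt_lag_param (hL : ContDiff ℝ 2 (jointLag f g h))
    (p : Fin l → ℝ) (x : Fin n → ℝ) (y : Fin me → ℝ) (z : Fin mi → ℝ) :
    HasFDerivAt (fun q => Lag f g h q x y z)
      ((fderiv ℝ (jointLag f g h) ((x, y, z), p)).comp (ContinuousLinearMap.inr ℝ _ _)) p :=
  HasFDerivAt.comp p (hL.differentiable (by norm_num) _).hasFDerivAt
    (hasFDerivAt_prodMk_right (𝕜 := ℝ) (x, y, z) p)

end Envelope

/-- **Fiacco.** Under SOSC, SCS and LICQ at a KKT point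
`(x*,y*,z*)` of NLP(p*), along the unique `C¹` local primal-dual solution map
`w(p) = (x(p),y(p),z(p))` the local value function `φ_ℓ(p) = f(x(p),p)` is `C²`
near `p*`, equals the Lagrangian along the path, and its gradient is the partial
gradient of the Lagrangian with respect to `p` at fixed `(x,y,z)`. -/
theorem fiacco_local_value_function_smooth
    (hf : ContDiff ℝ 2 fun q : (Fin n → ℝ) × (Fin l → ℝ) => f q.1 q.2)
    (hg : ∀ i : Fin me, ContDiff ℝ 2 fun q : (Fin n → ℝ) × (Fin l → ℝ) => g q.1 q.2 i)
    (hh : ∀ j : Fin mi, ContDiff ℝ 2 fun q : (Fin n → ℝ) × (Fin l → ℝ) => h q.1 q.2 j)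
    (ps : Fin l → ℝ) (xs : Fin n → ℝ) (ys : Fin me → ℝ) (zs : Fin mi → ℝ)
    (hkkt : IsKKT f g h ps xs ys zs)
    (hsosc : SOSC f g h ps xs)
    (hscs : SCS h ps xs zs)
    (hlicq : LICQ g h ps xs)
    -- the unique C¹ local primal-dual solution map of Fiacco's theorem
    (U : Set (Fin l → ℝ)) (hU : U ∈ 𝓝 ps)
    (xf : (Fin l → ℝ) → Fin n → ℝ) (yf : (Fin l → ℝ) → Fin me → ℝ)
    (zf : (Fin l → ℝ) → Fin mi → ℝ)
    (hwC1 : ContDiffOn ℝ 1 (fun p' => (xf p', yf p', zf p')) U)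
    (hw0 : xf ps = xs ∧ yf ps = ys ∧ zf ps = zs)
    (hwkkt : ∀ p' ∈ U, IsKKT f g h p' (xf p') (yf p') (zf p')) :
    ∃ U' : Set (Fin l → ℝ), IsOpen U' ∧ ps ∈ U' ∧ U' ⊆ U ∧
      -- the local value function is C² near ps
      ContDiffOn ℝ 2 (fun p' => f (xf p') p') U' ∧
      ∀ p' ∈ U',
        -- φ_ℓ(p) = L(x(p), y(p), z(p), p)
        f (xf p') p' = Lag f g h p' (xf p') (yf p') (zf p') ∧
        -- ∇_p φ_ℓ(p) = ∇_p L(x(p), y(p), z(p), p)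
        fderiv ℝ (fun q => f (xf q) q) p'
          = fderiv ℝ (fun q => Lag f g h q (xf p') (yf p') (zf p')) p' := by
  have hL := contDiff_jointLag hf hg hh
  have hO : IsOpen (interior U) := isOpen_interior
  have hW : ContDiffOn ℝ 1 (fun p' => (xf p', yf p', zf p')) (interior U) :=
    hwC1.mono interior_subset
  have hval : ∀ p ∈ interior U, HasFDerivAt (fun q => f (xf q) q)
      ((fderiv ℝ (jointLag f g h) ((xf p, yf p, zf p), p)).comp
        (ContinuousLinearMap.inr ℝ _ _)) p := by
    intro p hp
    have hd : DifferentiableAt ℝ (fun p' => (xf p', yf p', zf p')) p :=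
      (hW.differentiableOn (by norm_num)).differentiableAt (hO.mem_nhds hp)
    refine hasFDerivAt_value hL hd.fst hd.snd.snd.continuousAt ?_
    filter_upwards [hO.mem_nhds hp] with q hq using hwkkt q (interior_subset hq)
  refine ⟨interior U, hO, mem_interior_iff_mem_nhds.2 hU, interior_subset, ?_, ?_⟩
  · have h2 : (2 : WithTop ℕ∞) = 1 + 1 := by norm_num
    rw [h2, contDiffOn_succ_iff_fderiv_of_isOpen hO]
    refine ⟨fun p hp => (hval p hp).differentiableAt.differentiableWithinAt, by simp, ?_⟩
    have hD : ContDiff ℝ 1 (fderiv ℝ (jointLag f g h)) :=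
      hL.fderiv_right (by norm_num)
    have hc : ContDiffOn ℝ 1 (fun p => (fderiv ℝ (jointLag f g h) ((xf p, yf p, zf p), p)).comp
        (ContinuousLinearMap.inr ℝ _ _)) (interior U) :=
      (hD.comp_contDiffOn (hW.prodMk contDiffOn_id)).clm_comp contDiffOn_const
    exact hc.congr fun p hp => (hval p hp).fderiv
  · intro p hp
    exact ⟨(hwkkt p (interior_subset hp)).lag_eq,
      (hval p hp).fderiv.trans (hasFDerivAt_lag_param hL _ _ _ _).fderiv.symm⟩

end SensNLP
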